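/- arXiv:0805.0965 — 2 statements merged into one kernel-verified Lean document; each statement's English description precedes it below -/
import Mathlib

section
/- For g₁, g₂ in ℚ[χ]/⟨1+χ+⋯+χ^{2^K-1}⟩: if w_l(g₁) ≠ w_l(g₂) then w_l(g₁+g₂) = min(w_l(g₁), w_l(g₂)), and if w_l(g₁) = w_l(g₂) (both finite) then w_l(g₁+g₂) > w_l(g₁). -/
noncomputable section
open Polynomial

/-- The quotient ring ℚ[χ]/⟨1+χ+⋯+χ^{2^K-1}⟩. -/
abbrev QB (K : ℕ) :=
  Polynomial ℚ ⧸ Ideal.span {(∑ i ∈ Finset.range (2 ^ K), X ^ i : Polynomial ℚ)}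

def mkB (K : ℕ) : Polynomial ℚ →+* QB K := Ideal.Quotient.mk _

/-- The quotient ring ℚ[χ]/⟨1+χ^{2^l}⟩. -/
abbrev QS (l : ℕ) := Polynomial ℚ ⧸ Ideal.span {(1 + X ^ (2 ^ l) : Polynomial ℚ)}

def mkS (l : ℕ) : Polynomial ℚ →+* QS l := Ideal.Quotient.mk _

/-- `IsNF K l g w` : g admits a w_l-normal form pr_l(g) = (2^a/u)·((1-χ)^b·v₁ + 2·v₂)
with u, v₁(1) odd, 0 ≤ b < 2^l, and w = a + b/2^l. -/
def IsNF (K l : ℕ) (g : QB K) (w : ℚ) : Prop :=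
  ∃ (p : Polynomial ℚ) (a u : ℤ) (b : ℕ) (v₁ v₂ : Polynomial ℤ),
    mkB K p = g ∧ Odd u ∧ b < 2 ^ l ∧ Odd (v₁.eval 1) ∧
    mkS l p = mkS l (C ((2 : ℚ) ^ a / (u : ℚ)) *
      ((1 - X) ^ b * v₁.map (Int.castRingHom ℚ) + 2 * v₂.map (Int.castRingHom ℚ))) ∧
    w = a + (b : ℚ) / 2 ^ l

open Classical in
/-- The valuation w_l : w_l(g) = a + b/2^l from the normal form, and ∞ if
1+χ^{2^l} divides g (i.e. no normal form exists). -/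
def wl (K l : ℕ) (g : QB K) : WithTop ℚ :=
  if h : ∃ w : ℚ, IsNF K l g w then (h.choose : WithTop ℚ) else ⊤


section General
set_option linter.unusedSectionVars false
variable {L : Type*} [Field L] [CharZero L]

def InO (z x : L) : Prop := ∃ (u : ℤ) (s : ℤ[X]), Odd u ∧ (u : L) * x = aeval z s
def InU (z x : L) : Prop :=
  ∃ (u : ℤ) (s : ℤ[X]), Odd u ∧ Odd (s.eval 1) ∧ (u : L) * x = aeval z s

lemma odd_cast_ne {u : ℤ} (h : Odd u) : (u : L) ≠ 0 := by
  have : u ≠ 0 := by rintro rfl; simp at h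
  exact_mod_cast this

lemma InU.inO {z x : L} (h : InU z x) : InO z x := by
  obtain ⟨u, s, hu, _, h⟩ := h; exact ⟨u, s, hu, h⟩

lemma InO.mul {z x y : L} (h : InO z x) (h' : InO z y) : InO z (x * y) := by
  obtain ⟨u, s, hu, e⟩ := h
  obtain ⟨u', s', hu', e'⟩ := h'
  refine ⟨u * u', s * s', hu.mul hu', ?_⟩
  rw [map_mul, ← e, ← e']; push_cast; ring

lemma InU.mul {z x y : L} (h : InU z x) (h' : InU z y) : InU z (x * y) := by
  obtain ⟨u, s, hu, hs, e⟩ := h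
  obtain ⟨u', s', hu', hs', e'⟩ := h'
  refine ⟨u * u', s * s', hu.mul hu', by rw [eval_mul]; exact hs.mul hs', ?_⟩
  rw [map_mul, ← e, ← e']; push_cast; ring

lemma InO.add {z x y : L} (h : InO z x) (h' : InO z y) : InO z (x + y) := by
  obtain ⟨u, s, hu, e⟩ := h
  obtain ⟨u', s', hu', e'⟩ := h'
  refine ⟨u * u', C u' * s + C u * s', hu.mul hu', ?_⟩
  simp only [map_add, map_mul, ← e, ← e', eq_intCast, map_intCast]; push_cast; ring

lemma inO_aeval (z : L) (s : ℤ[X]) : InO z (aeval z s) := ⟨1, s, odd_one, by simp⟩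
lemma inU_aeval (z : L) {s : ℤ[X]} (h : Odd (s.eval 1)) : InU z (aeval z s) :=
  ⟨1, s, odd_one, h, by simp⟩
lemma inU_one (z : L) : InU z 1 := by
  simpa using inU_aeval z (s := 1) (by simp)
lemma inU_int (z : L) {u : ℤ} (h : Odd u) : InU z u := by
  simpa using inU_aeval z (s := C u) (by simpa using h)
lemma inO_pi (z : L) : InO z (1 - z) := by
  have h := inO_aeval z (1 - X)
  rwa [map_sub, map_one, aeval_X] at h
lemma InO.pow {z x : L} (h : InO z x) (n : ℕ) : InO z (x ^ n) := by
  induction n with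
  | zero => simpa using (inU_one z).inO
  | succ k ih => rw [pow_succ]; exact ih.mul h
lemma InU.pow {z x : L} (h : InU z x) (n : ℕ) : InU z (x ^ n) := by
  induction n with
  | zero => simpa using inU_one z
  | succ k ih => rw [pow_succ]; exact ih.mul h

lemma exists_h (l : ℕ) : ∃ h : ℤ[X], (1 - X) ^ (2 ^ l) = 1 + X ^ (2 ^ l) + 2 * h ∧ Odd (h.eval 1) := by
  have : ∃ h : ℤ[X], (1 - X) ^ (2 ^ l) = 1 + X ^ (2 ^ l) + 2 * h := by
    induction l with
    | zero => exact ⟨-X, by ring⟩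
    | succ k ih =>
      obtain ⟨h, e⟩ := ih
      refine ⟨X ^ 2 ^ k + 2 * h * (1 + X ^ (2 ^ k)) + 2 * h ^ 2, ?_⟩
      rw [pow_succ, pow_mul, e]; ring
  obtain ⟨h, e⟩ := this
  refine ⟨h, e, ?_⟩
  have := congrArg (eval 1) e
  simp at this
  exact ⟨-1, by omega⟩

variable {z : L} {l : ℕ}

lemma pi_ne (hz : z ^ (2 ^ l) = -1) : 1 - z ≠ 0 := by
  intro h
  have : z = 1 := by linear_combination -h
  subst this
  norm_num at hz

lemma ev_ne (hmin : ∀ q : ℤ[X], aeval z q = 0 → Even (q.eval 1)) {s : ℤ[X]} (h : Odd (s.eval 1)) :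
    aeval z s ≠ 0 := fun h0 => (Int.not_even_iff_odd.2 h) (hmin s h0)

lemma InU.ne_zero (hmin : ∀ q : ℤ[X], aeval z q = 0 → Even (q.eval 1)) {x : L} (h : InU z x) :
    x ≠ 0 := by
  obtain ⟨u, s, hu, hs, e⟩ := h
  rintro rfl
  exact ev_ne hmin hs (by simpa using e.symm)

lemma integral_ev (hz : z ^ (2 ^ l) = -1) (s : ℤ[X]) : IsIntegral ℤ (aeval z s) := by
  have h1 : IsIntegral ℤ z := by
    refine ⟨X ^ (2 ^ l) + C 1, monic_X_pow_add_C _ (by positivity), ?_⟩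
    simp [hz]
  have : aeval z s ∈ Algebra.adjoin ℤ {z} := aeval_mem_adjoin_singleton ℤ z
  exact (Algebra.adjoin_le (S := integralClosure ℤ L) (by
    rw [Set.singleton_subset_iff]; exact h1)) this

lemma scale_odd (f : ℤ[X]) (hf : f.Monic) (c : ℤ) (hc : Odd c) : Odd ((f.scaleRoots 2).eval c) := by
  rw [eval_eq_sum_range, Finset.sum_range_succ, natDegree_scaleRoots]
  refine Even.add_odd ?_ ?_
  · refine Finset.even_sum _ fun i hi => ?_
    rw [coeff_scaleRoots]
    have : f.natDegree - i ≠ 0 := by have := Finset.mem_range.1 hi; omega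
    exact ((even_two.pow_of_ne_zero this).mul_left _).mul_right _
  · rw [coeff_scaleRoots]; simpa [hf.coeff_natDegree] using hc.pow

lemma dvd_odd (hz : z ^ (2 ^ l) = -1) (s : ℤ[X]) (hs : Odd (s.eval 1)) :
    ∃ (s' : ℤ[X]) (t : ℤ), Odd t ∧ aeval z s * aeval z s' = t := by
  obtain ⟨h, e, -⟩ := exists_h l
  obtain ⟨q, hq⟩ := X_sub_C_dvd_sub_C_eval (a := (1 : ℤ)) (p := s)
  set c := s.eval 1
  -- s = c - (1-X) q
  have hs1 : s = C c - (1 - X) * q := by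
    have : s = C c + (X - C 1) * q := by rw [← hq]; ring
    rw [this]; simp; ring
  obtain ⟨r, hr⟩ := sub_dvd_pow_sub_pow (C c) ((1 - X) * q) (2 ^ l)
  rw [← hs1] at hr
  set Y : ℤ[X] := h * q ^ (2 ^ l)
  obtain ⟨f, hf, hf0⟩ := integral_ev hz Y
  have hF := scaleRoots_aeval_eq_zero (r := (2 : ℤ)) (show aeval (aeval z Y) f = 0 from hf0)
  set F := f.scaleRoots 2
  obtain ⟨r', hr'⟩ := sub_dvd_eval_sub (C (c ^ (2 ^ l))) (2 * Y) (F.map C)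
  refine ⟨r * r', F.eval (c ^ (2 ^ l)), scale_odd f hf _ hs.pow, ?_⟩
  have e1 : aeval z s * aeval z r = aeval z (C (c ^ (2 ^ l)) - 2 * Y) := by
    rw [← map_mul, ← hr, mul_pow, e]
    simp [Y, hz]; ring
  rw [map_mul, ← mul_assoc, e1, ← map_mul, ← hr', map_sub]
  have e2 : eval (C (c ^ (2 ^ l))) (F.map C) = C (F.eval (c ^ (2 ^ l))) := by
    rw [eval_map, eval₂_at_apply]
  have e3 : aeval z (eval (2 * Y) (F.map C)) = 0 := by
    rw [← hF, eval_map]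
    have : eval₂ C (2 * Y) F = aeval (2 * Y) F := rfl
    rw [this, ← aeval_algHom_apply]
    simp [map_ofNat (aeval z) 2]
  rw [e2, e3]; simp

lemma InU.inv (hz : z ^ (2 ^ l) = -1) (hmin : ∀ q : ℤ[X], aeval z q = 0 → Even (q.eval 1))
    {x : L} (h : InU z x) : InU z x⁻¹ := by
  have hx := h.ne_zero hmin
  obtain ⟨u, s, hu, hs, e⟩ := h
  obtain ⟨s', t, ht, e'⟩ := dvd_odd hz s hs
  refine ⟨t, C u * s', ht, ?_, ?_⟩
  · have := hmin (s * s' - C t) (by simp [e'])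
    simp at this
    have h2 : Odd (s.eval 1 * s'.eval 1) := by
      have := this.add_odd ht
      simpa using this
    rw [eval_mul, eval_C]
    exact hu.mul (Int.odd_mul.1 h2).2
  · rw [← e', ← e]; simp; field_simp

lemma InU.zpow (hz : z ^ (2 ^ l) = -1) (hmin : ∀ q : ℤ[X], aeval z q = 0 → Even (q.eval 1))
    {x : L} (h : InU z x) (n : ℤ) : InU z (x ^ n) := by
  obtain ⟨m, rfl | rfl⟩ := n.eq_nat_or_neg
  · simpa using h.pow m
  · rw [zpow_neg]; simpa using (h.pow m).inv hz hmin

lemma two_eq (hz : z ^ (2 ^ l) = -1) (hmin : ∀ q : ℤ[X], aeval z q = 0 → Even (q.eval 1)) :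
    ∃ ε : L, InU z ε ∧ (2 : L) = (1 - z) ^ (2 ^ l) * ε := by
  obtain ⟨h, e, ho⟩ := exists_h l
  refine ⟨(aeval z h)⁻¹, (inU_aeval z ho).inv hz hmin, ?_⟩
  have := congrArg (aeval z) e
  simp [hz, map_ofNat (aeval z) 2] at this
  rw [this]
  have := ev_ne hmin ho
  field_simp

lemma even_div (hz : z ^ (2 ^ l) = -1) (hmin : ∀ q : ℤ[X], aeval z q = 0 → Even (q.eval 1))
    {x : L} {u : ℤ} {s : ℤ[X]} (hu : Odd u) (hs : Even (s.eval 1)) (e : (u : L) * x = aeval z s) :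
    ∃ o, InO z o ∧ x = (1 - z) * o := by
  obtain ⟨ε, hε, h2⟩ := two_eq hz hmin
  obtain ⟨q, hq⟩ := X_sub_C_dvd_sub_C_eval (a := (1 : ℤ)) (p := s)
  obtain ⟨k, hk⟩ := hs
  rw [hk] at hq
  have hs1 : aeval z s = (z - 1) * aeval z q + 2 * k := by
    have : s = C (k + k) + (X - C 1) * q := by rw [← hq]; ring
    rw [this]; simp; ring
  have hpos : 2 ^ l = (2 ^ l - 1) + 1 := by have : 0 < 2 ^ l := by positivity
                                            omega
  rw [hpos] at h2
  have hu0 : (u : L) ≠ 0 := odd_cast_ne hu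
  refine ⟨(u : L)⁻¹ * (aeval z (-q) + (1 - z) ^ (2 ^ l - 1) * ε * aeval z (C k)), ?_, ?_⟩
  · exact (((inU_int z hu).inv hz hmin).inO).mul
      ((inO_aeval z _).add ((((inO_pi z).pow _).mul hε.inO).mul (inO_aeval z _)))
  · apply mul_left_cancel₀ hu0
    rw [e, hs1, h2]
    simp; field_simp; ring

lemma not_inU (hmin : ∀ q : ℤ[X], aeval z q = 0 → Even (q.eval 1)) {o : L} (ho : InO z o) :
    ¬ InU z ((1 - z) * o) := by
  rintro ⟨u, s, hu, hs, e⟩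
  obtain ⟨u', r, hu', e'⟩ := ho
  have := hmin (C u' * s - C u * (1 - X) * r) (by simp [← e, ← e']; ring)
  simp at this
  rw [Int.even_mul] at this
  rcases this with h | h
  · exact Int.not_even_iff_odd.2 hu' h
  · exact Int.not_even_iff_odd.2 hs h

lemma inO_cases (hz : z ^ (2 ^ l) = -1) (hmin : ∀ q : ℤ[X], aeval z q = 0 → Even (q.eval 1))
    {x : L} (hx : InO z x) : InU z x ∨ ∃ o, InO z o ∧ x = (1 - z) * o := by
  obtain ⟨u, s, hu, e⟩ := hx
  rcases Int.even_or_odd (s.eval 1) with h | h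
  · exact Or.inr (even_div hz hmin hu h e)
  · exact Or.inl ⟨u, s, hu, h, e⟩

lemma InU.add_pi (hz : z ^ (2 ^ l) = -1) (hmin : ∀ q : ℤ[X], aeval z q = 0 → Even (q.eval 1))
    {x o : L} (hx : InU z x) (ho : InO z o) : InU z (x + (1 - z) * o) := by
  rcases inO_cases hz hmin (hx.inO.add ((inO_pi z).mul ho)) with h | ⟨o', ho', e⟩
  · exact h
  · exfalso
    refine not_inU hmin (ho'.add ((inO_aeval z (-1)).mul ho)) ?_
    convert hx using 1
    simp; linear_combination -e

lemma InU.add (hz : z ^ (2 ^ l) = -1) (hmin : ∀ q : ℤ[X], aeval z q = 0 → Even (q.eval 1))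
    {x y : L} (h : InU z x) (h' : InU z y) : ∃ o, InO z o ∧ x + y = (1 - z) * o := by
  obtain ⟨u, s, hu, hs, e⟩ := h
  obtain ⟨u', s', hu', hs', e'⟩ := h'
  refine even_div hz hmin (u := u * u') (s := C u' * s + C u * s') (hu.mul hu') ?_ ?_
  · simpa using (hu'.mul hs).add_odd (hu.mul hs')
  simp only [map_add, map_mul, ← e, ← e', eq_intCast, map_intCast]; push_cast; ring

/-- `x` has valuation `n`. -/
def HasV (z x : L) (n : ℤ) : Prop := ∃ ε, InU z ε ∧ x = (1 - z) ^ n * ε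

lemma HasV.mul (hz : z ^ (2 ^ l) = -1) {x y : L} {n m : ℤ} (h : HasV z x n) (h' : HasV z y m) :
    HasV z (x * y) (n + m) := by
  obtain ⟨ε, hε, rfl⟩ := h
  obtain ⟨ε', hε', rfl⟩ := h'
  refine ⟨_, hε.mul hε', ?_⟩
  rw [zpow_add₀ (pi_ne hz)]; ring

lemma HasV.inv (hz : z ^ (2 ^ l) = -1) (hmin : ∀ q : ℤ[X], aeval z q = 0 → Even (q.eval 1))
    {x : L} {n : ℤ} (h : HasV z x n) : HasV z x⁻¹ (-n) := by
  obtain ⟨ε, hε, rfl⟩ := h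
  refine ⟨_, hε.inv hz hmin, ?_⟩
  rw [zpow_neg, mul_inv]

lemma HasV.ne_zero (hz : z ^ (2 ^ l) = -1) (hmin : ∀ q : ℤ[X], aeval z q = 0 → Even (q.eval 1))
    {x : L} {n : ℤ} (h : HasV z x n) : x ≠ 0 := by
  obtain ⟨ε, hε, rfl⟩ := h
  exact mul_ne_zero (zpow_ne_zero _ (pi_ne hz)) (hε.ne_zero hmin)

/-- A unit times `π^n` cannot lie in `π^m O` with `m > n`. -/
lemma HasV.not_lt (hz : z ^ (2 ^ l) = -1) (hmin : ∀ q : ℤ[X], aeval z q = 0 → Even (q.eval 1))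
    {x o : L} {n m : ℤ} (h : HasV z x n) (ho : InO z o) (e : x = (1 - z) ^ m * o) : m ≤ n := by
  by_contra hlt
  push Not at hlt
  obtain ⟨ε, hε, rfl⟩ := h
  obtain ⟨k, hk⟩ := Int.eq_ofNat_of_zero_le (show 0 ≤ m - n - 1 by omega)
  have hm : m = n + 1 + k := by omega
  refine not_inU hmin (((inO_pi z).pow k).mul ho) ?_
  convert hε using 1
  apply mul_left_cancel₀ (zpow_ne_zero n (pi_ne hz))
  rw [e, hm, zpow_add₀ (pi_ne hz), zpow_add₀ (pi_ne hz), zpow_natCast, zpow_one]; ring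

lemma HasV.unique (hz : z ^ (2 ^ l) = -1) (hmin : ∀ q : ℤ[X], aeval z q = 0 → Even (q.eval 1))
    {x : L} {n m : ℤ} (h : HasV z x n) (h' : HasV z x m) : n = m := by
  obtain ⟨ε, hε, e⟩ := id h
  obtain ⟨ε', hε', e'⟩ := id h'
  exact le_antisymm (h'.not_lt hz hmin hε.inO e) (h.not_lt hz hmin hε'.inO e')

lemma HasV.add_lt (hz : z ^ (2 ^ l) = -1) (hmin : ∀ q : ℤ[X], aeval z q = 0 → Even (q.eval 1))
    {x y : L} {n m : ℤ} (h : HasV z x n) (h' : HasV z y m) (hlt : n < m) : HasV z (x + y) n := by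
  obtain ⟨ε, hε, rfl⟩ := h
  obtain ⟨ε', hε', rfl⟩ := h'
  obtain ⟨k, hk⟩ := Int.eq_ofNat_of_zero_le (show 0 ≤ m - n - 1 by omega)
  have hm : m = n + 1 + k := by omega
  refine ⟨_, hε.add_pi hz hmin (((inO_pi z).pow k).mul hε'.inO), ?_⟩
  rw [hm, zpow_add₀ (pi_ne hz), zpow_add₀ (pi_ne hz), zpow_natCast, zpow_one]; ring

lemma HasV.add_eq (hz : z ^ (2 ^ l) = -1) (hmin : ∀ q : ℤ[X], aeval z q = 0 → Even (q.eval 1))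
    {x y : L} {n m : ℤ} (h : HasV z x n) (h' : HasV z y n) (hs : HasV z (x + y) m) : n < m := by
  obtain ⟨ε, hε, rfl⟩ := h
  obtain ⟨ε', hε', rfl⟩ := h'
  obtain ⟨o, ho, e⟩ := hε.add hz hmin hε'
  have := hs.not_lt hz hmin (m := n + 1) ho (by
    rw [← mul_add, e, zpow_add₀ (pi_ne hz), zpow_one]; ring)
  omega

lemma hasV_two (hz : z ^ (2 ^ l) = -1) (hmin : ∀ q : ℤ[X], aeval z q = 0 → Even (q.eval 1)) :
    HasV z 2 (2 ^ l) := by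
  obtain ⟨ε, hε, e⟩ := two_eq hz hmin
  refine ⟨ε, hε, ?_⟩
  rw [e]; congr 1; rw [← zpow_natCast]; simp

lemma hasV_two_zpow (hz : z ^ (2 ^ l) = -1) (hmin : ∀ q : ℤ[X], aeval z q = 0 → Even (q.eval 1))
    (a : ℤ) : HasV z (2 ^ a) (2 ^ l * a) := by
  obtain ⟨ε, hε, e⟩ := hasV_two hz hmin
  refine ⟨ε ^ a, hε.zpow hz hmin a, ?_⟩
  rw [e, mul_zpow, zpow_mul]

lemma InU.hasV {x : L} (h : InU z x) : HasV z x 0 := ⟨x, h, by simp⟩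

lemma exists_odd_part (m : ℤ) (h : m ≠ 0) : ∃ (j : ℕ) (k : ℤ), Odd k ∧ m = 2 ^ j * k := by
  have hf : FiniteMultiplicity (2 : ℤ) m := Int.finiteMultiplicity_iff.2 ⟨by decide, h⟩
  obtain ⟨k, hk, hk'⟩ := hf.exists_eq_pow_mul_and_not_dvd
  exact ⟨_, k, by rwa [← Int.not_even_iff_odd, even_iff_two_dvd], hk⟩

lemma hasV_int (hz : z ^ (2 ^ l) = -1) (hmin : ∀ q : ℤ[X], aeval z q = 0 → Even (q.eval 1))
    {m : ℤ} (h : m ≠ 0) : ∃ n, HasV z (m : L) n := by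
  obtain ⟨j, k, hk, rfl⟩ := exists_odd_part m h
  have := (hasV_two_zpow hz hmin j).mul hz (inU_int z hk).hasV
  exact ⟨_, by simpa using this⟩

lemma hasV_ev (hz : z ^ (2 ^ l) = -1) (hmin : ∀ q : ℤ[X], aeval z q = 0 → Even (q.eval 1))
    {s : ℤ[X]} (h : aeval z s ≠ 0) : ∃ n, HasV z (aeval z s) n := by
  by_contra hcon
  push Not at hcon
  have key : ∀ n : ℕ, ∃ o, InO z o ∧ aeval z s = (1 - z) ^ n * o := by
    intro n
    induction n with
    | zero => exact ⟨_, inO_aeval z s, by simp⟩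
    | succ k ih =>
      obtain ⟨o, ho, e⟩ := ih
      rcases inO_cases hz hmin ho with h | ⟨o', ho', rfl⟩
      · exact absurd ⟨o, h, by rw [e, zpow_natCast]⟩ (hcon k)
      · exact ⟨o', ho', by rw [e]; ring⟩
  obtain ⟨f, hf0, hf⟩ := (integral_ev hz s).isAlgebraic.exists_nonzero_coeff_and_aeval_eq_zero
    (mem_nonZeroDivisors_of_ne_zero h)
  obtain ⟨q, hq⟩ := X_dvd_sub_C (p := f)
  have e1 : aeval z s * aeval z (-q.comp s) = (f.coeff 0 : ℤ) := by
    have : f = C (f.coeff 0) + X * q := by rw [← hq]; ring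
    rw [this] at hf
    simp at hf
    rw [map_neg, aeval_comp]
    linear_combination -hf
  obtain ⟨n, hn⟩ := hasV_int (L := L) hz hmin hf0
  obtain ⟨o, ho, e⟩ := key (n + 1).toNat
  have := hn.not_lt hz hmin (m := (n+1).toNat) (ho.mul (inO_aeval z (-q.comp s))) (by
    rw [← e1, e, zpow_natCast]; ring)
  omega

end General

def zl (l : ℕ) : ℂ := Complex.exp (2 * Real.pi * Complex.I / ((2 ^ (l + 1) : ℕ) : ℂ))

lemma zl_prim (l : ℕ) : IsPrimitiveRoot (zl l) (2 ^ (l + 1)) :=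
  Complex.isPrimitiveRoot_exp _ (by positivity)

lemma cyc (l : ℕ) (R : Type*) [CommRing R] : cyclotomic (2 ^ (l + 1)) R = 1 + X ^ (2 ^ l) := by
  rw [cyclotomic_prime_pow_eq_geom_sum Nat.prime_two]
  simp [Finset.sum_range_succ]

lemma zl_pow (l : ℕ) : zl l ^ (2 ^ l) = -1 := by
  have := (zl_prim l).isRoot_cyclotomic (by positivity)
  rw [cyc] at this
  simp at this
  linear_combination this

lemma zl_min (l : ℕ) (q : ℤ[X]) (h : aeval (zl l) q = 0) : Even (q.eval 1) := by
  have h1 := minpoly.isIntegrallyClosed_dvd ((zl_prim l).isIntegral (by positivity)) h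
  rw [← cyclotomic_eq_minpoly (zl_prim l) (by positivity), cyc] at h1
  obtain ⟨r, rfl⟩ := h1
  simp [one_add_one_eq_two]

lemma mkS_eq (l : ℕ) (p q : ℚ[X]) : mkS l p = mkS l q ↔ aeval (zl l) p = aeval (zl l) q := by
  unfold mkS
  rw [Ideal.Quotient.eq, Ideal.mem_span_singleton, ← cyc,
    cyclotomic_eq_minpoly_rat (zl_prim l) (by positivity), minpoly.dvd_iff, map_sub, sub_eq_zero]

lemma mkB_eq {K l : ℕ} (hl : l < K) {p q : ℚ[X]} (h : mkB K p = mkB K q) :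
    aeval (zl l) p = aeval (zl l) q := by
  unfold mkB at h
  rw [Ideal.Quotient.eq, Ideal.mem_span_singleton] at h
  obtain ⟨r, hr⟩ := h
  have := congrArg (aeval (zl l)) hr
  have h1 : zl l ^ (2 ^ K) = 1 := (zl_prim l).pow_eq_one_iff_dvd _ |>.2 (pow_dvd_pow 2 hl)
  have h2 : ∑ i ∈ Finset.range (2 ^ K), zl l ^ i = 0 := by
    have h3 := geom_sum_mul (zl l) (2 ^ K)
    rw [h1, sub_self] at h3
    refine (mul_eq_zero.1 h3).resolve_right fun h4 => pi_ne (zl_pow l) ?_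
    linear_combination -h4
  simp [h2] at this
  linear_combination this

lemma aeval_map_int (l : ℕ) (v : ℤ[X]) :
    aeval (zl l) (v.map (Int.castRingHom ℚ)) = aeval (zl l) v :=
  aeval_map_algebraMap (A := ℚ) (zl l) v

lemma isNF_iff {K l : ℕ} (hl : l < K) (p : ℚ[X]) (w : ℚ) :
    IsNF K l (mkB K p) w ↔ ∃ n : ℤ, HasV (zl l) (aeval (zl l) p) n ∧ w = (n : ℚ) / 2 ^ l := by
  have hz := zl_pow l
  have hmin := zl_min l
  have h2l : (0 : ℤ) < 2 ^ l := by positivity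
  constructor
  · rintro ⟨p', a, u, b, v₁, v₂, hp, hu, hb, hv, e, rfl⟩
    rw [mkS_eq, mkB_eq hl hp] at e
    refine ⟨2 ^ l * a + b, ?_, ?_⟩
    · obtain ⟨ε, hε, h2⟩ := two_eq hz hmin
      obtain ⟨k, hk⟩ := Nat.exists_eq_add_of_lt hb
      have hin : InU (zl l) (aeval (zl l) v₁ +
          (1 - zl l) * ((1 - zl l) ^ k * ε * aeval (zl l) v₂)) :=
        (inU_aeval _ hv).add_pi hz hmin ((((inO_pi _).pow _).mul hε.inO).mul (inO_aeval _ _))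
      have hb' : HasV (zl l) ((1 - zl l) ^ b * (aeval (zl l) v₁ +
          (1 - zl l) * ((1 - zl l) ^ k * ε * aeval (zl l) v₂))) b :=
        ⟨_, hin, by rw [zpow_natCast]⟩
      have := ((hasV_two_zpow hz hmin a).mul hz ((inU_int (zl l) hu).inv hz hmin).hasV).mul hz hb'
      rw [add_zero] at this
      convert this using 1
      rw [e]
      simp only [map_mul, map_add, map_sub, map_one, map_pow, aeval_X, aeval_map_int, aeval_C,
        map_div₀, map_zpow₀, map_ofNat, map_intCast]
      rw [hk] at h2
      linear_combination (2 ^ a / (u : ℂ)) * aeval (zl l) v₂ * h2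
    · push_cast; field_simp
  · rintro ⟨n, hn, rfl⟩
    have hb0 := Int.emod_nonneg n h2l.ne'
    have hb1 := Int.emod_lt_of_pos n h2l
    obtain ⟨b, hb⟩ := Int.eq_ofNat_of_zero_le hb0
    have hdiv := Int.mul_ediv_add_emod n (2 ^ l)
    set a := n / 2 ^ l
    rw [hb] at hdiv hb1
    obtain ⟨ε, hε, e1⟩ := hn
    obtain ⟨ε', hε', e2⟩ := hasV_two_zpow hz hmin a
    obtain ⟨u, s, hu, hs, e⟩ := hε.mul (hε'.inv hz hmin)
    have hu0 : (u : ℂ) ≠ 0 := odd_cast_ne hu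
    have hε0 := hε'.ne_zero hmin
    refine ⟨p, a, u, b, s, 0, rfl, hu, by exact_mod_cast hb1, hs, ?_, ?_⟩
    · rw [mkS_eq]
      simp only [map_mul, map_add, map_sub, map_one, map_pow, aeval_X, aeval_map_int, aeval_C,
        map_div₀, map_zpow₀, map_ofNat, map_intCast, Polynomial.map_zero, map_zero, mul_zero,
        add_zero, ← e]
      rw [e1, e2, ← hdiv, zpow_add₀ (pi_ne hz)]
      simp only [Int.ofNat_eq_natCast, zpow_natCast]
      field_simp
    · rw [← hdiv]; push_cast; field_simp

lemma exists_hasV (l : ℕ) (p : ℚ[X]) (hp : aeval (zl l) p ≠ 0) :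
    ∃ n, HasV (zl l) (aeval (zl l) p) n := by
  have hz := zl_pow l
  have hmin := zl_min l
  obtain ⟨d, hd, e⟩ := IsLocalization.integerNormalization_spec (nonZeroDivisors ℤ) p
  set s := IsLocalization.integerNormalization (nonZeroDivisors ℤ) p
  have hd0 : d ≠ 0 := nonZeroDivisors.ne_zero hd
  have hd0' : (d : ℂ) ≠ 0 := by exact_mod_cast hd0
  have e' : aeval (zl l) s = d * aeval (zl l) p := by
    rw [← aeval_map_algebraMap ℚ, e]; simp
  obtain ⟨n, hn⟩ := hasV_int (L := ℂ) hz hmin hd0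
  obtain ⟨m, hm⟩ := hasV_ev hz hmin (s := s) (by rw [e']; exact mul_ne_zero hd0' hp)
  refine ⟨-n + m, ?_⟩
  have := (hn.inv hz hmin).mul hz hm
  rwa [e', inv_mul_cancel_left₀ hd0'] at this

lemma wl_of_hasV {K l : ℕ} (hl : l < K) {p : ℚ[X]} {n : ℤ}
    (h : HasV (zl l) (aeval (zl l) p) n) : wl K l (mkB K p) = (((n : ℚ) / 2 ^ l : ℚ) : WithTop ℚ) := by
  have hex : ∃ w : ℚ, IsNF K l (mkB K p) w := ⟨_, (isNF_iff hl p _).2 ⟨n, h, rfl⟩⟩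
  unfold wl
  rw [dif_pos hex]
  obtain ⟨m, hm, e⟩ := (isNF_iff hl p _).1 hex.choose_spec
  rw [e, h.unique (zl_pow l) (zl_min l) hm]

lemma wl_of_zero {K l : ℕ} (hl : l < K) {p : ℚ[X]}
    (h : aeval (zl l) p = 0) : wl K l (mkB K p) = ⊤ := by
  unfold wl
  rw [dif_neg]
  rintro ⟨w, hw⟩
  obtain ⟨n, hn, -⟩ := (isNF_iff hl p _).1 hw
  exact hn.ne_zero (zl_pow l) (zl_min l) h

lemma wl_congr {K l : ℕ} (hl : l < K) {p q : ℚ[X]} (h : aeval (zl l) p = aeval (zl l) q) :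
    wl K l (mkB K p) = wl K l (mkB K q) := by
  by_cases h0 : aeval (zl l) p = 0
  · rw [wl_of_zero hl h0, wl_of_zero hl (h ▸ h0)]
  · obtain ⟨n, hn⟩ := exists_hasV l p h0
    rw [wl_of_hasV hl hn, wl_of_hasV hl (h ▸ hn)]

lemma wl_lt_iff (l : ℕ) (n m : ℤ) : (((n : ℚ) / 2 ^ l : ℚ) : WithTop ℚ) <
    (((m : ℚ) / 2 ^ l : ℚ) : WithTop ℚ) ↔ n < m := by
  rw [WithTop.coe_lt_coe, div_lt_div_iff_of_pos_right (by positivity)]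
  exact_mod_cast Iff.rfl

/-- If w_l(g₁) ≠ w_l(g₂) then w_l(g₁+g₂) = min(w_l(g₁), w_l(g₂)); if
w_l(g₁) = w_l(g₂) (both finite) then w_l(g₁+g₂) > w_l(g₁). -/
theorem stmt11 (K l : ℕ) (hK : 1 ≤ K) (hl : l ≤ K - 1) (g₁ g₂ : QB K) :
    (wl K l g₁ ≠ wl K l g₂ →
      wl K l (g₁ + g₂) = min (wl K l g₁) (wl K l g₂)) ∧
    (wl K l g₁ = wl K l g₂ → wl K l g₁ ≠ ⊤ →
      wl K l (g₁ + g₂) > wl K l g₁) := by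
  have hl' : l < K := by omega
  obtain ⟨p, rfl⟩ : ∃ p, mkB K p = g₁ := Ideal.Quotient.mk_surjective g₁
  obtain ⟨q, rfl⟩ : ∃ q, mkB K q = g₂ := Ideal.Quotient.mk_surjective g₂
  rw [← map_add]
  have hz := zl_pow l
  have hmin := zl_min l
  by_cases hp : aeval (zl l) p = 0
  · have h1 : wl K l (mkB K (p + q)) = wl K l (mkB K q) := wl_congr hl' (by simp [hp])
    rw [h1, wl_of_zero hl' hp]
    exact ⟨fun _ => by simp, fun _ h => absurd rfl h⟩
  by_cases hq : aeval (zl l) q = 0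
  · have h1 : wl K l (mkB K (p + q)) = wl K l (mkB K p) := wl_congr hl' (by simp [hq])
    rw [h1, wl_of_zero hl' hq]
    exact ⟨fun _ => by simp, fun h h' => absurd h h'⟩
  obtain ⟨n, hn⟩ := exists_hasV l p hp
  obtain ⟨m, hm⟩ := exists_hasV l q hq
  rw [wl_of_hasV hl' hn, wl_of_hasV hl' hm]
  constructor
  · intro hne
    rcases lt_trichotomy n m with h | h | h
    · rw [min_eq_left ((wl_lt_iff l n m).2 h).le]
      exact wl_of_hasV hl' (by rw [map_add]; exact hn.add_lt hz hmin hm h)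
    · exact absurd (by rw [h]) hne
    · rw [min_eq_right ((wl_lt_iff l m n).2 h).le]
      exact wl_of_hasV hl' (by rw [map_add, add_comm]; exact hm.add_lt hz hmin hn h)
  · intro heq _
    have hnm : n = m := le_antisymm
      (not_lt.1 fun h => ((wl_lt_iff l m n).2 h).ne heq.symm)
      (not_lt.1 fun h => ((wl_lt_iff l n m).2 h).ne heq)
    subst hnm
    by_cases hs : aeval (zl l) (p + q) = 0
    · rw [wl_of_zero hl' hs]; exact WithTop.coe_lt_top _
    · obtain ⟨k, hk⟩ := exists_hasV l (p + q) hs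
      rw [wl_of_hasV hl' hk]
      exact (wl_lt_iff l n k).2 (hn.add_eq hz hmin hm (by rwa [map_add] at hk))
end
end

section
/- Necessary condition via auxiliary element: let N = 2^K, g ∈ ℚ[χ]/⟨1+χ+⋯+χ^{N-1}⟩ with pr_l(g) ∈ 4·ℤ[χ]/⟨1+χ^{2^l}⟩ for all l. If there exist h in the image of ℤ[χ] and an index 0 ≤ l' ≤ K-1 with w_l(g)+w_l(h) ≥ 2+K-l-2^{-l} for all l ≠ l' (0 ≤ l ≤ K-1) but w_{l'}(g)+w_{l'}(h) < 2+K-l'-2^{-l'}, then g does not lie in 4·ℤ[χ]/⟨1+χ+⋯+χ^{N-1}⟩. -/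
noncomputable section
open Polynomial

/-- 1 + X^(2^l) over ℤ. -/
def Phi (l : ℕ) : Polynomial ℤ := 1 + X ^ (2 ^ l)

/-- (1-X)-adic order modulo Phi l, up to odd integers. -/
def IsPi (l : ℕ) (p : Polynomial ℤ) (c : ℕ) : Prop :=
  ∃ (u : ℤ) (q : Polynomial ℤ), Odd u ∧ Odd (q.eval 1) ∧
    Phi l ∣ C u * p - (1 - X) ^ c * q

theorem Phi_eval (l : ℕ) : (Phi l).eval 1 = 2 := by
  simp [Phi]

theorem Phi_monic (l : ℕ) : (Phi l).Monic := by
  unfold Phi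
  rw [add_comm]
  exact monic_X_pow_add_C (1 : ℤ) (by positivity)

theorem exists_t (l : ℕ) : ∃ t : Polynomial ℤ, Odd (t.eval 1) ∧
    (1 - X) ^ (2 ^ l) = Phi l + 2 * t := by
  have h : ∃ t : Polynomial ℤ, (1 - X) ^ (2 ^ l) = Phi l + 2 * t := by
    induction l with
    | zero => exact ⟨-X, by simp [Phi]; ring⟩
    | succ n ih =>
      obtain ⟨t, ht⟩ := ih
      refine ⟨X ^ (2 ^ n) + 2 * t * Phi n + 2 * t ^ 2, ?_⟩
      rw [pow_succ, pow_mul, ht]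
      have e : (X : Polynomial ℤ) ^ (2 ^ (n + 1)) = (X ^ (2 ^ n)) ^ 2 := by
        rw [← pow_mul, pow_succ]
      unfold Phi
      rw [e]
      ring
  obtain ⟨t, ht⟩ := h
  refine ⟨t, ?_, ht⟩
  have := congrArg (eval 1) ht
  simp [Phi_eval] at this
  have h2 : t.eval 1 = -1 := by linarith
  rw [h2]; decide

theorem even_odd_split (q : Polynomial ℤ) : ∃ a b : Polynomial ℤ,
    q = expand ℤ 2 a + X * expand ℤ 2 b := by
  induction q using Polynomial.induction_on' with
  | add p q hp hq =>
    obtain ⟨a, b, h⟩ := hp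
    obtain ⟨a', b', h'⟩ := hq
    exact ⟨a + a', b + b', by rw [map_add, map_add, h, h']; ring⟩
  | monomial n c =>
    rcases Nat.even_or_odd' n with ⟨k, rfl | rfl⟩
    · exact ⟨monomial k c, 0, by simp [expand_monomial, mul_comm]⟩
    · refine ⟨0, monomial k c, ?_⟩
      simp [expand_monomial, X_mul_monomial, mul_comm]

theorem exists_inv (l : ℕ) : ∀ q : Polynomial ℤ, Odd (q.eval 1) →
    ∃ (s : Polynomial ℤ) (m : ℤ), Odd m ∧ Phi l ∣ s * q - C m := by
  induction l with
  | zero =>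
    intro q hq
    refine ⟨1, q.eval (-1), ?_, ?_⟩
    · have h := sub_dvd_eval_sub (1 : ℤ) (-1) q
      norm_num at h
      obtain ⟨k, hk⟩ := h
      have : q.eval (-1) = q.eval 1 - 2 * k := by linarith
      rw [this]
      exact hq.sub_even (even_two_mul k)
    · have h := X_sub_C_dvd_sub_C_eval (a := (-1 : ℤ)) (p := q)
      have e : Phi 0 = X - C (-1) := by simp [Phi]; ring
      rw [e, one_mul]; exact h
  | succ n ih =>
    intro q hq
    obtain ⟨a, b, hab⟩ := even_odd_split q
    have hq1 : q.eval 1 = a.eval 1 + b.eval 1 := by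
      rw [hab]; simp [expand_eval]
    obtain ⟨s, m, hm, r, hr⟩ := ih (a ^ 2 - X * b ^ 2) (by
      simp only [eval_sub, eval_pow, eval_mul, eval_X, one_mul]
      rw [hq1] at hq
      have : eval 1 a ^ 2 - eval 1 b ^ 2 = (a.eval 1 + b.eval 1) * (a.eval 1 + b.eval 1 - 2 * b.eval 1) := by ring
      rw [this]
      exact hq.mul (hq.sub_even (even_two_mul _)))
    refine ⟨expand ℤ 2 s * (expand ℤ 2 a - X * expand ℤ 2 b), m, hm, expand ℤ 2 r, ?_⟩
    have h := congrArg (expand ℤ 2) hr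
    have e : expand ℤ 2 (Phi n) = Phi (n + 1) := by
      unfold Phi
      rw [map_add, map_one, map_pow, expand_X, ← pow_mul, pow_succ 2 n, mul_comm 2]
    rw [map_mul, e, map_sub, map_mul, map_sub, map_mul, map_pow, map_pow, expand_X, expand_C] at h
    rw [← h, hab]
    ring

/-- odd multiple of 2 is (1-X)^(2^l) times an odd element -/
theorem isPi_two (l : ℕ) : IsPi l 2 (2 ^ l) := by
  obtain ⟨t, ht, h⟩ := exists_t l
  obtain ⟨s, m, hm, r, hr⟩ := exists_inv l t ht
  refine ⟨m, s, hm, ?_, ?_⟩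
  · have := congrArg (eval 1) hr
    simp [Phi_eval] at this
    have h2 : Odd (s.eval 1 * t.eval 1) := by
      have e : s.eval 1 * t.eval 1 = m + 2 * r.eval 1 := by linarith
      rw [e]; exact hm.add_even (even_two_mul _)
    exact (Int.odd_mul.mp h2).1
  · rw [h]
    exact ⟨- 2 * r - s, by linear_combination (-2) * hr⟩

theorem IsPi.mul {l : ℕ} {p p' : Polynomial ℤ} {c c' : ℕ} (h : IsPi l p c) (h' : IsPi l p' c') :
    IsPi l (p * p') (c + c') := by
  obtain ⟨u, q, hu, hq, r, hr⟩ := h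
  obtain ⟨u', q', hu', hq', r', hr'⟩ := h'
  refine ⟨u * u', q * q', hu.mul hu', by rw [eval_mul]; exact hq.mul hq',
    r * C u' * p' + (1 - X) ^ c * q * r', ?_⟩
  rw [C_mul, pow_add]
  linear_combination C u' * p' * hr + (1 - X) ^ c * q * hr'

theorem isPi_odd (l : ℕ) (q : Polynomial ℤ) (h : Odd (q.eval 1)) : IsPi l q 0 :=
  ⟨1, q, odd_one, h, by simp⟩

theorem isPi_one_sub (l : ℕ) : IsPi l (1 - X) 1 :=
  ⟨1, 1, odd_one, by simp, by simp⟩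

theorem IsPi.pow {l : ℕ} {p : Polynomial ℤ} {c : ℕ} (h : IsPi l p c) (n : ℕ) :
    IsPi l (p ^ n) (c * n) := by
  induction n with
  | zero => simpa using isPi_odd l 1 (by simp)
  | succ n ih => rw [pow_succ, Nat.mul_succ]; exact ih.mul h

theorem isPi_two_pow (l n : ℕ) : IsPi l (2 ^ n) (2 ^ l * n) := (isPi_two l).pow n

theorem cancel_one_sub (l : ℕ) (p : Polynomial ℤ) (c : ℕ) (h : Phi l ∣ (1 - X) ^ c * p) :
    Phi l ∣ p := by
  induction c with
  | zero => simpa using h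
  | succ n ih =>
    apply ih
    obtain ⟨r, hr⟩ := h
    have h1 := congrArg (eval 1) hr
    simp [Phi_eval] at h1
    obtain ⟨k, hk⟩ := dvd_iff_isRoot.mpr (show r.IsRoot 1 from h1)
    refine ⟨-k, ?_⟩
    have hne : (1 - X : Polynomial ℤ) ≠ 0 := by
      intro h0
      have := congrArg (eval 0) h0
      simp at this
    apply mul_left_cancel₀ hne
    rw [hk] at hr
    rw [C_1] at hr
    linear_combination hr

theorem IsPi.not_lt {l : ℕ} {p : Polynomial ℤ} {c d : ℕ} (h : IsPi l p c) (m : ℤ) (hm : Odd m)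
    (G : Polynomial ℤ) (hG : Phi l ∣ C m * p - (1 - X) ^ d * G) : d ≤ c := by
  by_contra! hlt
  obtain ⟨u, q, hu, hq, r, hr⟩ := h
  obtain ⟨r', hr'⟩ := hG
  obtain ⟨e, rfl⟩ := Nat.exists_eq_add_of_lt hlt
  have : Phi l ∣ (1 - X) ^ c * (C m * q - (1 - X) ^ (e + 1) * C u * G) := by
    refine ⟨C u * r' - C m * r, ?_⟩
    rw [add_assoc, pow_add] at hr'
    linear_combination C u * hr' - C m * hr
  obtain ⟨k, hk⟩ := cancel_one_sub _ _ _ this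
  have h1 := congrArg (eval 1) hk
  simp [Phi_eval] at h1
  have h2 : Odd (m * q.eval 1) := hm.mul hq
  rw [h1] at h2
  exact (Int.not_odd_iff_even.mpr (even_two_mul _)) h2

theorem IsPi.unique {l : ℕ} {p : Polynomial ℤ} {c d : ℕ} (h : IsPi l p c) (h' : IsPi l p d) :
    c = d := by
  have a := h
  have b := h'
  obtain ⟨u, q, hu, hq, h1⟩ := a
  obtain ⟨u', q', hu', hq', h1'⟩ := b
  exact le_antisymm (h'.not_lt u hu q h1) (h.not_lt u' hu' q' h1')

theorem IsPi.not_dvd {l : ℕ} {p : Polynomial ℤ} {c : ℕ} (h : IsPi l p c) : ¬ Phi l ∣ p := by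
  intro hd
  have := h.not_lt (d := c + 1) 1 odd_one 0 (by simpa using hd)
  omega

theorem IsPi.of_odd {l : ℕ} {p : Polynomial ℤ} {c : ℕ} {u : ℤ} (hu : Odd u)
    (h : IsPi l (C u * p) c) : IsPi l p c := by
  obtain ⟨m, q, hm, hq, h1⟩ := h
  exact ⟨m * u, q, hm.mul hu, hq, by rw [C_mul, mul_assoc]; exact h1⟩

theorem IsPi.congr {l : ℕ} {p p' : Polynomial ℤ} {c : ℕ} (h : IsPi l p c) (hd : Phi l ∣ p' - p) :
    IsPi l p' c := by
  obtain ⟨m, q, hm, hq, r, h1⟩ := h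
  obtain ⟨k, hk⟩ := hd
  exact ⟨m, q, hm, hq, r + C m * k, by linear_combination h1 + C m * hk⟩

theorem isPi_nf (l b : ℕ) (hb : b < 2 ^ l) (v₁ v₂ : Polynomial ℤ) (h : Odd (v₁.eval 1)) :
    IsPi l ((1 - X) ^ b * v₁ + 2 * v₂) b := by
  obtain ⟨m, s, hm, hs, r, hr⟩ := isPi_two l
  obtain ⟨e, he⟩ := Nat.exists_eq_add_of_lt hb
  refine ⟨m, C m * v₁ + (1 - X) ^ (e + 1) * s * v₂, hm, ?_, v₂ * r, ?_⟩
  · simpa using hm.mul h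
  · rw [he, add_assoc, pow_add] at hr
    linear_combination v₂ * hr

/-- (1-X)^(2^l*n) is 2^n times an odd element mod Phi -/
theorem one_sub_pow (l n : ℕ) : ∃ t : Polynomial ℤ, Odd (t.eval 1) ∧
    Phi l ∣ (1 - X) ^ (2 ^ l * n) - 2 ^ n * t := by
  obtain ⟨t, ht, h⟩ := exists_t l
  refine ⟨t ^ n, by rw [eval_pow]; exact ht.pow, ?_⟩
  rw [pow_mul, h, ← mul_pow]
  exact dvd_trans ⟨1, by ring⟩ (sub_dvd_pow_sub_pow (Phi l + 2 * t) (2 * t) n)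

theorem exists_isPi (l : ℕ) (p : Polynomial ℤ) : Phi l ∣ p ∨ ∃ c, IsPi l p c := by
  by_contra! hcon
  obtain ⟨hnd, hno⟩ := hcon
  have key : ∀ c : ℕ, ∃ (u : ℤ) (G : Polynomial ℤ), Odd u ∧
      Phi l ∣ C u * p - (1 - X) ^ c * G := by
    intro c
    induction c with
    | zero => exact ⟨1, p, odd_one, by simp⟩
    | succ c ih =>
      obtain ⟨u, G, hu, r, hr⟩ := ih
      rcases Int.even_or_odd (G.eval 1) with he | ho
      · obtain ⟨k, hk⟩ := he
        obtain ⟨G', hG'⟩ := X_sub_C_dvd_sub_C_eval (a := (1 : ℤ)) (p := G)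
        rw [hk, C_1, C_add] at hG'
        obtain ⟨m, s, hm, hs, r2, hr2⟩ := isPi_two l
        obtain ⟨e, he⟩ : ∃ e, 2 ^ l = e + 1 := ⟨2 ^ l - 1, by have := Nat.one_le_two_pow (n := l); omega⟩
        rw [he, pow_succ] at hr2
        refine ⟨m * u, (1 - X) ^ e * s * C k - C m * G', hm.mul hu,
          C m * r + (1 - X) ^ c * C k * r2, ?_⟩
        rw [C_mul, pow_succ]
        linear_combination C m * hr + (1 - X) ^ c * C m * hG' + (1 - X) ^ c * C k * hr2
      · exact absurd ⟨u, G, hu, ho, r, hr⟩ (hno c)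
  apply hnd
  rw [← modByMonic_eq_zero_iff_dvd (Phi_monic l)]
  ext i
  rw [coeff_zero]
  have hd : ∀ n : ℕ, (2 : ℤ) ^ n ∣ (p %ₘ Phi l).coeff i := by
    intro n
    obtain ⟨u, G, hu, r, hr⟩ := key (2 ^ l * n)
    obtain ⟨t, ht, r2, hr2⟩ := one_sub_pow l n
    have h1 : Phi l ∣ C u * p - C (2 ^ n) * (t * G) :=
      ⟨r + G * r2, by rw [C_pow, C_ofNat]; linear_combination hr + G * hr2⟩
    have h2 := (modByMonic_eq_zero_iff_dvd (Phi_monic l)).mpr h1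
    rw [sub_modByMonic, C_mul', C_mul', smul_modByMonic, smul_modByMonic] at h2
    have h3 := congrArg (fun f => coeff f i) h2
    simp only [coeff_sub, coeff_smul, smul_eq_mul, coeff_zero] at h3
    have h4 : (2 : ℤ) ^ n ∣ u * (p %ₘ Phi l).coeff i := ⟨_, by linarith⟩
    refine IsCoprime.dvd_of_dvd_mul_left (IsCoprime.pow_left ?_) h4
    exact (Int.isCoprime_iff_gcd_eq_one.mpr (by
      rw [← Int.isCoprime_iff_gcd_eq_one]
      obtain ⟨k, hk⟩ := hu
      exact ⟨-k, 1, by rw [hk]; ring⟩))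
  by_contra hne
  have := Int.le_of_dvd (abs_pos.mpr hne) ((dvd_abs _ _).mpr (hd (((p %ₘ Phi l).coeff i).natAbs)))
  have h5 : ((p %ₘ Phi l).coeff i).natAbs < 2 ^ ((p %ₘ Phi l).coeff i).natAbs := Nat.lt_two_pow_self
  rw [Int.abs_eq_natAbs] at this
  have h6 : (((p %ₘ Phi l).coeff i).natAbs : ℤ) < 2 ^ ((p %ₘ Phi l).coeff i).natAbs := by
    exact_mod_cast h5
  linarith

/-! Transfer to the quotient rings. -/

theorem Phi_map (l : ℕ) : (Phi l).map (Int.castRingHom ℚ) = 1 + X ^ (2 ^ l) := by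
  simp [Phi]

theorem mkS_eq_iff (l : ℕ) (p q : Polynomial ℚ) :
    mkS l p = mkS l q ↔ (1 + X ^ (2 ^ l) : Polynomial ℚ) ∣ p - q := by
  unfold mkS
  rw [Ideal.Quotient.eq, Ideal.mem_span_singleton]

theorem mkS_map_eq_iff (l : ℕ) (p q : Polynomial ℤ) :
    mkS l (p.map (Int.castRingHom ℚ)) = mkS l (q.map (Int.castRingHom ℚ)) ↔ Phi l ∣ p - q := by
  rw [mkS_eq_iff, ← Phi_map, ← Polynomial.map_sub,
    map_dvd_map _ (RingHom.injective_int _) (Phi_monic l)]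

theorem prod_Phi (n : ℕ) : (X - 1) * ∏ j ∈ Finset.range n, Phi j = X ^ (2 ^ n) - 1 := by
  induction n with
  | zero => simp
  | succ n ih =>
    rw [Finset.prod_range_succ, ← mul_assoc, ih, pow_succ, pow_mul]
    unfold Phi; ring

theorem geom_prod (n : ℕ) : (∑ i ∈ Finset.range (2 ^ n), X ^ i : Polynomial ℚ) =
    ∏ j ∈ Finset.range n, (Phi j).map (Int.castRingHom ℚ) := by
  have h := congrArg (Polynomial.map (Int.castRingHom ℚ)) (prod_Phi n)
  rw [Polynomial.map_mul, Polynomial.map_prod] at h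
  have hne : (X - 1 : Polynomial ℚ) ≠ 0 := by
    intro h0
    have := congrArg (eval 0) h0
    simp at this
  apply mul_left_cancel₀ hne
  rw [mul_geom_sum]
  simpa using h.symm

theorem mkS_of_mkB {K l : ℕ} (hl : l < K) {p q : Polynomial ℚ} (h : mkB K p = mkB K q) :
    mkS l p = mkS l q := by
  rw [mkS_eq_iff]
  unfold mkB at h
  rw [Ideal.Quotient.eq, Ideal.mem_span_singleton, geom_prod] at h
  rw [← Phi_map]
  exact (Finset.dvd_prod_of_mem _ (Finset.mem_range.mpr hl)).trans h

theorem isPi_of_isNF {K l : ℕ} (hl : l < K) (Z : Polynomial ℤ) (w : ℚ)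
    (h : IsNF K l (mkB K (Z.map (Int.castRingHom ℚ))) w) :
    ∃ c : ℕ, IsPi l Z c ∧ w = (c : ℚ) / 2 ^ l := by
  obtain ⟨p, a, u, b, v₁, v₂, hp, hu, hb, hv, hS, rfl⟩ := h
  rw [mkS_of_mkB hl hp] at hS
  obtain ⟨m, n, ha⟩ : ∃ m n : ℕ, a = (m : ℤ) - n := ⟨a.toNat, (-a).toNat, by omega⟩
  have hu0 : (u : ℚ) ≠ 0 := by
    have : u ≠ 0 := by rintro rfl; simp at hu
    exact_mod_cast this
  have hC2 : (C (2 : ℚ)) = 2 := C_ofNat 2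
  have hS2 : mkS l ((C u * (2 ^ n * Z)).map (Int.castRingHom ℚ)) =
      mkS l ((2 ^ m * ((1 - X) ^ b * v₁ + 2 * v₂)).map (Int.castRingHom ℚ)) := by
    have e1 : (C u * (2 ^ n * Z)).map (Int.castRingHom ℚ) =
        C ((u : ℚ) * 2 ^ n) * Z.map (Int.castRingHom ℚ) := by
      simp [mul_assoc, hC2]
    have e2 : (2 ^ m * ((1 - X) ^ b * v₁ + 2 * v₂)).map (Int.castRingHom ℚ) =
        C ((u : ℚ) * 2 ^ n) * (C ((2 : ℚ) ^ a / (u : ℚ)) *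
      ((1 - X) ^ b * v₁.map (Int.castRingHom ℚ) + 2 * v₂.map (Int.castRingHom ℚ))) := by
      rw [← mul_assoc, ← C_mul]
      have : (u : ℚ) * 2 ^ n * (2 ^ a / u) = 2 ^ m := by
        rw [ha, zpow_sub₀ (by norm_num)]
        field_simp
        simp
      rw [this]
      simp [hC2]
    rw [e1, e2, map_mul, hS, ← map_mul]
  rw [mkS_map_eq_iff] at hS2
  have hP : IsPi l (2 ^ n * Z) (2 ^ l * m + b) :=
    IsPi.of_odd hu (((isPi_two_pow l m).mul (isPi_nf l b hb v₁ v₂ hv)).congr hS2)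
  rcases exists_isPi l Z with hd | ⟨c, hc⟩
  · exact absurd (hd.mul_left _) hP.not_dvd
  · refine ⟨c, hc, ?_⟩
    have hh := hP.unique ((isPi_two_pow l n).mul hc)
    have hq : (2 : ℚ) ^ l * m + b = 2 ^ l * n + c := by exact_mod_cast hh
    rw [ha]
    push_cast
    field_simp
    linarith

theorem isNF_of_isPi {K l : ℕ} (Z : Polynomial ℤ) (c : ℕ) (h : IsPi l Z c) :
    ∃ w, IsNF K l (mkB K (Z.map (Int.castRingHom ℚ))) w := by
  obtain ⟨u, q, hu, hq, r, hr⟩ := h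
  obtain ⟨t, ht, r2, hr2⟩ := one_sub_pow l (c / 2 ^ l)
  have hu0 : (u : ℚ) ≠ 0 := by
    have : u ≠ 0 := by rintro rfl; simp at hu
    exact_mod_cast this
  refine ⟨_, Z.map (Int.castRingHom ℚ), (c / 2 ^ l : ℕ), u, c % 2 ^ l, t * q, 0, rfl, hu,
    Nat.mod_lt _ (by positivity), by rw [eval_mul]; exact ht.mul hq, ?_, rfl⟩
  have h1 : Phi l ∣ C u * Z - 2 ^ (c / 2 ^ l) * ((1 - X) ^ (c % 2 ^ l) * (t * q)) := by
    refine ⟨r + (1 - X) ^ (c % 2 ^ l) * q * r2, ?_⟩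
    have e : (1 - X : Polynomial ℤ) ^ c = (1 - X) ^ (2 ^ l * (c / 2 ^ l)) * (1 - X) ^ (c % 2 ^ l) := by
      rw [← pow_add, Nat.div_add_mod]
    rw [e] at hr
    linear_combination hr + (1 - X) ^ (c % 2 ^ l) * q * hr2
  rw [← mkS_map_eq_iff] at h1
  have h2 := congrArg (fun x => mkS l (C ((u : ℚ)⁻¹)) * x) h1
  simp only [← map_mul] at h2
  have e1 : C ((u : ℚ)⁻¹) * (C u * Z).map (Int.castRingHom ℚ) = Z.map (Int.castRingHom ℚ) := by
    rw [Polynomial.map_mul, map_C, ← mul_assoc, ← C_mul]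
    simp [hu0]
  rw [e1] at h2
  rw [h2]
  congr 1
  rw [zpow_natCast, div_eq_mul_inv, mul_comm ((2 : ℚ) ^ _), C_mul, mul_assoc]
  have hC2 : (C (2 : ℚ)) = 2 := C_ofNat 2
  simp [hC2]

theorem wl_eq {K l : ℕ} (hl : l < K) (Z : Polynomial ℤ) (c : ℕ) (h : IsPi l Z c) :
    wl K l (mkB K (Z.map (Int.castRingHom ℚ))) = (((c : ℚ) / 2 ^ l : ℚ) : WithTop ℚ) := by
  have hex := isNF_of_isPi (K := K) Z c h
  unfold wl
  rw [dif_pos hex]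
  obtain ⟨c', h1, h2⟩ := isPi_of_isNF hl Z _ hex.choose_spec
  rw [h2, h1.unique h]

theorem wl_top {K l : ℕ} (hl : l < K) (Z : Polynomial ℤ) (h : Phi l ∣ Z) :
    wl K l (mkB K (Z.map (Int.castRingHom ℚ))) = ⊤ := by
  unfold wl
  rw [dif_neg]
  rintro ⟨w, hw⟩
  obtain ⟨c', h1, h2⟩ := isPi_of_isNF hl Z _ hw
  exact h1.not_dvd h

/-! The integral idempotent multiples. -/

def EE (K l : ℕ) : Polynomial ℤ := (X - 1) * ∏ j ∈ (Finset.range K).erase l, Phi j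

theorem Phi_dvd_pow (i j : ℕ) (h : i < j) : Phi i ∣ X ^ (2 ^ j) - 1 := by
  rw [← prod_Phi]
  exact (Finset.dvd_prod_of_mem _ (Finset.mem_range.mpr h)).mul_left _

theorem EE_congr (K l : ℕ) (hl : l < K) : Phi l ∣ EE K l + 2 ^ (K - l) := by
  obtain ⟨d, rfl⟩ := Nat.exists_eq_add_of_lt hl
  have e : l + d + 1 - l = d + 1 := by omega
  rw [e]
  unfold EE
  clear e hl
  induction d with
  | zero =>
    have : (Finset.range (l + 0 + 1)).erase l = Finset.range l := by
      ext x; simp; omega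
    rw [this, prod_Phi]
    exact ⟨1, by unfold Phi; ring⟩
  | succ d ih =>
    have : (Finset.range (l + (d + 1) + 1)).erase l =
        insert (l + d + 1) ((Finset.range (l + d + 1)).erase l) := by
      ext x; simp; omega
    rw [this, Finset.prod_insert (by simp)]
    obtain ⟨r, hr⟩ := ih
    obtain ⟨k, hk⟩ := Phi_dvd_pow l (l + d + 1) (by omega)
    refine ⟨Phi (l + d + 1) * r - 2 ^ (d + 1) * k, ?_⟩
    have e2 : Phi (l + d + 1) = X ^ (2 ^ (l + d + 1)) - 1 + 2 := by unfold Phi; ring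
    rw [hk] at e2
    rw [pow_succ _ (d + 1)]
    linear_combination Phi (l + d + 1) * hr - 2 ^ (d + 1) * e2

theorem Phi_dvd_EE (K l j : ℕ) (hj : j < K) (hne : j ≠ l) : Phi j ∣ EE K l :=
  (Finset.dvd_prod_of_mem _ (by simp [hj, hne])).mul_left _

theorem isCoprime_of_dvd_sub_two {a b : Polynomial ℚ} (h : a ∣ b - 2) : IsCoprime a b := by
  obtain ⟨k, hk⟩ := h
  refine ⟨- C (1 / 2) * k, C (1 / 2), ?_⟩
  have : (C (1 / 2) * 2 : Polynomial ℚ) = 1 := by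
    rw [← C_ofNat, ← C_mul]; norm_num
  linear_combination C (1 / 2) * hk + this

theorem Phi_sub_two (j : ℕ) : (Phi j).map (Int.castRingHom ℚ) - 2 =
    (X ^ (2 ^ j) - 1 : Polynomial ℤ).map (Int.castRingHom ℚ) := by
  simp [Phi]; ring

theorem Phi_coprime_lt (i j : ℕ) (h : i < j) : IsCoprime ((Phi i).map (Int.castRingHom ℚ))
    ((Phi j).map (Int.castRingHom ℚ)) := by
  apply isCoprime_of_dvd_sub_two
  rw [Phi_sub_two]
  exact Polynomial.map_dvd _ (Phi_dvd_pow i j h)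

theorem EE_dvd (K l : ℕ) (D : Polynomial ℤ) (h1 : (X - 1) ∣ D)
    (h2 : ∀ j < K, j ≠ l → Phi j ∣ D) : EE K l ∣ D := by
  have hmon : (EE K l).Monic := by
    unfold EE
    refine Monic.mul (by simpa using monic_X_sub_C (1 : ℤ)) (monic_prod_of_monic _ _ fun i _ => Phi_monic i)
  rw [← map_dvd_map _ (RingHom.injective_int (Int.castRingHom ℚ)) hmon]
  unfold EE
  rw [Polynomial.map_mul, Polynomial.map_prod]
  apply IsCoprime.mul_dvd
  · apply IsCoprime.prod_right
    intro j hj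
    apply isCoprime_of_dvd_sub_two
    rw [Phi_sub_two, ← prod_Phi]
    exact Polynomial.map_dvd _ ⟨_, rfl⟩
  · exact Polynomial.map_dvd _ h1
  · apply Finset.prod_dvd_of_coprime
    · intro i hi j hj hij
      rcases lt_or_gt_of_ne hij with h | h
      · exact Phi_coprime_lt i j h
      · exact (Phi_coprime_lt j i h).symm
    · intro j hj
      simp at hj
      exact Polynomial.map_dvd _ (h2 j hj.2 hj.1)

theorem key_step (K l' : ℕ) (F : Polynomial ℤ)
    (h : ∀ l < K, l ≠ l' → ∃ (u : ℤ) (G : Polynomial ℤ), Odd u ∧ Phi l ∣ C u * F - 2 ^ (K - l) * G)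
    (s : Finset ℕ) : (∀ l ∈ s, l < K ∧ l ≠ l') → ∃ (M : ℤ) (H : Polynomial ℤ), Odd M ∧
      (∀ l ∈ s, Phi l ∣ C M * F - H) ∧ (∀ j < K, j ∉ s → Phi j ∣ H) ∧ (X - 1) ∣ H := by
  induction s using Finset.induction_on with
  | empty => intro _; exact ⟨1, 0, odd_one, by simp, by simp, by simp⟩
  | insert l s hls ih =>
    intro hs
    obtain ⟨M, H, hM, hA, hB, hX⟩ := ih fun j hj => hs j (Finset.mem_insert_of_mem hj)
    obtain ⟨hlK, hll⟩ := hs l (Finset.mem_insert_self _ _)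
    obtain ⟨u, G, hu, r, hr⟩ := h l hlK hll
    refine ⟨u * M, C u * H - C M * EE K l * G, hu.mul hM, ?_, ?_, ?_⟩
    · intro j hj
      rw [C_mul]
      rcases Finset.mem_insert.mp hj with rfl | hjs
      · obtain ⟨k, hk⟩ := hB j hlK hls
        obtain ⟨e, he⟩ := EE_congr K j hlK
        exact ⟨C M * r - C u * k + C M * G * e,
          by linear_combination C M * hr - C u * hk + C M * G * he⟩
      · obtain ⟨k, hk⟩ := hA j hjs
        obtain ⟨e, he⟩ := Phi_dvd_EE K l j (hs j (Finset.mem_insert_of_mem hjs)).1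
          (by rintro rfl; exact hls hjs)
        exact ⟨C u * k + C M * G * e, by linear_combination C u * hk + C M * G * he⟩
    · intro j hj hjs
      rw [Finset.mem_insert, not_or] at hjs
      exact dvd_sub ((hB j hj hjs.2).mul_left _)
        (((Phi_dvd_EE K l j hj hjs.1).mul_left _).mul_right _)
    · exact dvd_sub (hX.mul_left _) (((Dvd.intro _ rfl : (X - 1) ∣ EE K l).mul_left _).mul_right _)

theorem key_final (K l' : ℕ) (hl' : l' < K) (F : Polynomial ℤ) (hF : (X - 1) ∣ F)
    (h : ∀ l < K, l ≠ l' → ∃ (u : ℤ) (G : Polynomial ℤ), Odd u ∧ Phi l ∣ C u * F - 2 ^ (K - l) * G) :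
    ∃ (M : ℤ) (G : Polynomial ℤ), Odd M ∧ Phi l' ∣ C M * F - 2 ^ (K - l') * G := by
  obtain ⟨M, H, hM, hA, hB, hX⟩ := key_step K l' F h ((Finset.range K).erase l')
    (by intro l hl; simp at hl; exact ⟨hl.2, hl.1⟩)
  obtain ⟨G, hG⟩ := EE_dvd K l' (C M * F - H) (dvd_sub (hF.mul_left _) hX)
    (fun j hj hne => hA j (by simp [hj, hne]))
  obtain ⟨k, hk⟩ := hB l' hl' (by simp)
  obtain ⟨e, he⟩ := EE_congr K l' hl'
  exact ⟨M, -G, hM, k + e * G, by linear_combination hG + hk + G * he⟩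

/-- Necessary condition via an auxiliary element h ∈ ℤ[χ]/⟨...⟩: if
w_l(g)+w_l(h) ≥ 2+K-l-2^{-l} for all l ≠ l' but w_{l'}(g)+w_{l'}(h) < 2+K-l'-2^{-l'},
then g ∉ 4·ℤ[χ]/⟨1+χ+⋯+χ^{2^K-1}⟩. -/
theorem stmt14 (K : ℕ) (hK : 1 ≤ K) (p : Polynomial ℚ)
    (h4 : ∀ l ≤ K - 1, ∃ z : Polynomial ℤ,
      mkS l p = mkS l (4 * z.map (Int.castRingHom ℚ)))
    (hz : Polynomial ℤ) (l' : ℕ) (hl' : l' ≤ K - 1)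
    (hge : ∀ l ≤ K - 1, l ≠ l' →
      ((2 + (K : ℚ) - (l : ℚ) - (2 : ℚ) ^ (-(l : ℤ)) : ℚ) : WithTop ℚ) ≤
        wl K l (mkB K p) + wl K l (mkB K (hz.map (Int.castRingHom ℚ))))
    (hlt : wl K l' (mkB K p) + wl K l' (mkB K (hz.map (Int.castRingHom ℚ))) <
      ((2 + (K : ℚ) - (l' : ℚ) - (2 : ℚ) ^ (-(l' : ℤ)) : ℚ) : WithTop ℚ)) :
    ¬ ∃ z : Polynomial ℤ, mkB K p = mkB K (4 * z.map (Int.castRingHom ℚ)) := by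
  rintro ⟨z, hpz⟩
  have hcast : (4 * z.map (Int.castRingHom ℚ)) = (2 ^ 2 * z).map (Int.castRingHom ℚ) := by
    simp; norm_num
  rw [hcast] at hpz
  rw [hpz] at hge hlt
  have hl'K : l' < K := by omega
  have hzpow : ∀ l : ℕ, (2 : ℚ) ^ (-(l : ℤ)) = 1 / 2 ^ l := by
    intro l; rw [zpow_neg, zpow_natCast, one_div]
  obtain ⟨M, G, hM, r, hr⟩ := key_final K l' hl'K ((1 - X) * (z * hz))
    (⟨-(z * hz), by ring⟩) (by
      intro l hlK hne
      have hg := hge l (by omega) hne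
      rcases exists_isPi l z with hd | ⟨c, hc⟩
      · exact ⟨1, 0, odd_one, by simpa using (hd.mul_right hz).mul_left (1 - X)⟩
      rcases exists_isPi l hz with hd | ⟨d, hd⟩
      · exact ⟨1, 0, odd_one, by simpa using (hd.mul_left z).mul_left (1 - X)⟩
      rw [wl_eq hlK _ _ ((isPi_two_pow l 2).mul hc), wl_eq hlK _ _ hd, ← WithTop.coe_add,
        WithTop.coe_le_coe, hzpow] at hg
      have hle : 2 ^ l * (K - l) ≤ 1 + (c + d) := by
        have hp : (0 : ℚ) < 2 ^ l := by positivity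
        rw [← add_div, le_div_iff₀ hp, sub_mul, one_div, inv_mul_cancel₀ hp.ne'] at hg
        push_cast at hg
        have : (2 : ℚ) ^ l * ((K - l : ℕ) : ℚ) ≤ 1 + (c + d) := by
          rw [Nat.cast_sub hlK.le]; linarith
        exact_mod_cast this
      obtain ⟨u, q, hu, hq, k, hk⟩ := (isPi_one_sub l).mul (hc.mul hd)
      obtain ⟨e, he⟩ := Nat.exists_eq_add_of_le hle
      obtain ⟨t, ht, k2, hk2⟩ := one_sub_pow l (K - l)
      rw [he, pow_add] at hk
      exact ⟨u, t * (1 - X) ^ e * q, hu, k + (1 - X) ^ e * q * k2,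
        by linear_combination hk + (1 - X) ^ e * q * hk2⟩)
  rcases exists_isPi l' z with hd | ⟨c, hc⟩
  · rw [wl_top hl'K _ (hd.mul_left _), top_add] at hlt
    exact absurd hlt not_top_lt
  rcases exists_isPi l' hz with hd | ⟨d, hd⟩
  · rw [wl_top hl'K _ hd, add_top] at hlt
    exact absurd hlt not_top_lt
  rw [wl_eq hl'K _ _ ((isPi_two_pow l' 2).mul hc), wl_eq hl'K _ _ hd, ← WithTop.coe_add,
    WithTop.coe_lt_coe, hzpow] at hlt
  have hlt2 : 1 + (c + d) < 2 ^ l' * (K - l') := by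
    have hp : (0 : ℚ) < 2 ^ l' := by positivity
    rw [← add_div, div_lt_iff₀ hp, sub_mul, one_div, inv_mul_cancel₀ hp.ne'] at hlt
    push_cast at hlt
    have : 1 + (c + d) < (2 : ℚ) ^ l' * ((K - l' : ℕ) : ℚ) := by
      rw [Nat.cast_sub hl'K.le]; linarith
    exact_mod_cast this
  obtain ⟨u, s, hu, hs, k, hk⟩ := isPi_two_pow l' (K - l')
  have := ((isPi_one_sub l').mul (hc.mul hd)).not_lt (d := 2 ^ l' * (K - l')) (u * M) (hu.mul hM)
    (s * G) ⟨C u * r + G * k, by rw [C_mul]; linear_combination C u * hr + G * hk⟩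
  omega
end
end
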